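/- arXiv:2011.12223 — 2 statements merged into one kernel-verified Lean document; each statement's English description precedes it below -/
import Mathlib

section
/- If M is a ℤ-submodule of ℚ² with L₀ ⊆ M, B(x,x) ∈ 2ℤ for every x ∈ M, and M ≠ L₀, then M is isometric to the hyperbolic plane: there exist u, w ∈ M with M = ℤu + ℤw, B(u,u) = B(w,w) = 0 and B(u,w) = 1. In other words, the only nontrivial even overlattice of the even lattice with Gram matrix [[10,5],[5,0]] is the hyperbolic plane U. -/
/-!
The vectors `f = e₁ - e₂` and `g = e₂` are isotropic with `B f g = 5`, so `L₀` is the rescaled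
hyperbolic plane `U(5)`; the argument works for `U(p)` with `p` prime. For `x` in an even
overlattice `M` of `ℤf + ℤg`, write `p x = m f + n g`, where `m = B x g` and `n = B x f` are
integers. Evenness of `B x x = 2 m n / p` forces `p ∣ m n`. If `x ∉ ℤf + ℤg`, exactly one of `m`,
`n` is divisible by `p`, and then `f / p` or `g / p` lies in `M`. So `M` contains a hyperbolic
plane, and this already is all of `M` because it is unimodular.
-/

open Submodule

section CommRing

variable {R V : Type*} [CommRing R] [AddCommGroup V] [Module R V]

/-- The symmetric bilinear space `(V, B)` is the hyperbolic plane rescaled by `c`, and `f`, `g` are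
isotropic generators realising this. Linear independence of `f` and `g` is not a field: it follows
whenever `c` is not a zero divisor. -/
structure IsHyperbolicPair (B : LinearMap.BilinForm R V) (c : R) (f g : V) : Prop where
  isSymm : B.IsSymm
  span_eq_top : span R {f, g} = ⊤
  left_self : B f f = 0
  right_self : B g g = 0
  left_right : B f g = c

/-- The lattice `M` is even with respect to `B`: every vector has norm in `2ℤ`. -/
def IsEvenLattice (B : LinearMap.BilinForm R V) (M : Submodule ℤ V) : Prop :=
  ∀ x ∈ M, ∃ k : ℤ, B x x = 2 * k

lemma mem_of_isCoprime_of_smul_mem {a b : R} {N : Submodule R V} {x : V} (hab : IsCoprime a b)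
    (ha : a • x ∈ N) (hb : b • x ∈ N) : x ∈ N := by
  obtain ⟨u, v, huv⟩ := hab
  rw [← one_smul R x, ← huv, add_smul, mul_smul, mul_smul]
  exact N.add_mem (N.smul_mem u ha) (N.smul_mem v hb)

lemma span_pair_sub_smul_left (a : R) (x y : V) : span R {x - a • y, y} = span R {x, y} := by
  apply le_antisymm <;> rw [span_le, Set.pair_subset_iff] <;>
    refine ⟨mem_span_pair.2 ?_, mem_span_of_mem (by simp)⟩
  exacts [⟨1, -a, by module⟩, ⟨1, a, by module⟩]

lemma span_pair_fin_two_eq_top : span R {![(1 : R), 0], ![0, 1]} = ⊤ :=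
  eq_top_iff'.2 fun x ↦ mem_span_pair.2 ⟨x 0, x 1, by ext i; fin_cases i <;> simp⟩

lemma isHyperbolicPair_toBilin' (a c : R) :
    IsHyperbolicPair (Matrix.toBilin' !![2 * a * c, c; c, 0]) c ![1, -a] ![0, 1] where
  isSymm := Matrix.isSymm_toBilin'_iff_isSymm.2 <| by
    ext i j; fin_cases i <;> fin_cases j <;> rfl
  span_eq_top := by
    rw [← span_pair_fin_two_eq_top, ← span_pair_sub_smul_left a ![1, 0]]
    simp
  left_self := by
    simp only [Matrix.toBilin'_apply, Fin.sum_univ_two, Matrix.of_apply, Matrix.cons_val]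
    ring
  right_self := by simp [Matrix.toBilin'_apply]
  left_right := by simp [Matrix.toBilin'_apply]

namespace IsHyperbolicPair

variable {B : LinearMap.BilinForm R V} {c : R} {f g : V}

protected lemma symm (h : IsHyperbolicPair B c f g) : IsHyperbolicPair B c g f where
  isSymm := h.isSymm
  span_eq_top := by rw [Set.pair_comm, h.span_eq_top]
  left_self := h.right_self
  right_self := h.left_self
  left_right := by rw [h.isSymm.eq, h.left_right]

lemma smul_eq (h : IsHyperbolicPair B c f g) (x : V) : c • x = B x g • f + B x f • g := by
  obtain ⟨a, b, rfl⟩ := mem_span_pair.1 (h.span_eq_top ▸ mem_top : x ∈ span R {f, g})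
  simp only [map_add, map_smul, LinearMap.add_apply, LinearMap.smul_apply, smul_eq_mul,
    h.left_self, h.right_self, h.left_right, h.symm.left_right]
  module

lemma mul_apply_self (h : IsHyperbolicPair B c f g) (x : V) :
    c * B x x = 2 * (B x g * B x f) := by
  have := congrArg (B x) (h.smul_eq x)
  simp only [map_add, map_smul, smul_eq_mul] at this
  linear_combination this

lemma smul_left (h : IsHyperbolicPair B c f g) {t : R} (ht : IsUnit t) :
    IsHyperbolicPair B (t * c) (t • f) g where
  isSymm := h.isSymm
  span_eq_top := by
    rw [span_insert, span_singleton_smul_eq ht, ← span_insert, h.span_eq_top]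
  left_self := by simp [h.left_self]
  right_self := h.right_self
  left_right := by simp [h.left_right]

end IsHyperbolicPair

end CommRing

section Field

variable {K V : Type*} [Field K] [CharZero K] [AddCommGroup V] [Module K V]
  {B : LinearMap.BilinForm K V} {M : Submodule ℤ V} {f g u w x y : V} {p : ℕ}

namespace IsEvenLattice

lemma exists_apply_eq_intCast (hM : IsEvenLattice B M) (hB : B.IsSymm) (hx : x ∈ M) (hy : y ∈ M) :
    ∃ n : ℤ, B x y = n := by
  obtain ⟨a, ha⟩ := hM x hx
  obtain ⟨b, hb⟩ := hM y hy
  obtain ⟨c, hc⟩ := hM (x + y) (M.add_mem hx hy)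
  have polarization : B (x + y) (x + y) = B x x + B y y + 2 * B x y := by
    simp only [map_add, LinearMap.add_apply, hB.eq y x]
    ring
  refine ⟨c - a - b, mul_left_cancel₀ (two_ne_zero (α := K)) ?_⟩
  push_cast
  linear_combination hc - ha - hb - polarization

lemma eq_span_of_isHyperbolicPair (hM : IsEvenLattice B M) (h : IsHyperbolicPair B 1 u w)
    (hu : u ∈ M) (hw : w ∈ M) : M = span ℤ {u, w} := by
  refine le_antisymm (fun x hx ↦ ?_) (span_le.2 (Set.pair_subset hu hw))
  obtain ⟨m, hm⟩ := hM.exists_apply_eq_intCast h.isSymm hx hw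
  obtain ⟨n, hn⟩ := hM.exists_apply_eq_intCast h.isSymm hx hu
  refine mem_span_pair.2 ⟨m, n, ?_⟩
  rw [← one_smul K x, h.smul_eq, hm, hn, Int.cast_smul_eq_zsmul, Int.cast_smul_eq_zsmul]

lemma exists_smul_eq_and_dvd_mul (hM : IsEvenLattice B M) (h : IsHyperbolicPair B (p : K) f g)
    (hf : f ∈ M) (hg : g ∈ M) (hx : x ∈ M) :
    ∃ m n : ℤ, (p : K) • x = m • f + n • g ∧ (p : ℤ) ∣ m * n := by
  obtain ⟨m, hm⟩ := hM.exists_apply_eq_intCast h.isSymm hx hg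
  obtain ⟨n, hn⟩ := hM.exists_apply_eq_intCast h.isSymm hx hf
  obtain ⟨k, hk⟩ := hM x hx
  refine ⟨m, n, ?_, k, ?_⟩
  · rw [h.smul_eq, hm, hn, Int.cast_smul_eq_zsmul, Int.cast_smul_eq_zsmul]
  · have norm_eq := h.mul_apply_self x
    rw [hm, hn, hk] at norm_eq
    have : (m * n : K) = p * k :=
      mul_left_cancel₀ (two_ne_zero (α := K)) (by linear_combination -norm_eq)
    exact_mod_cast this

end IsEvenLattice

lemma inv_smul_mem_of_smul_eq (hp : p ≠ 0) (hf : f ∈ M) (hg : g ∈ M) (hx : x ∈ M) {m n : ℤ}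
    (h : (p : K) • x = m • f + n • g) (hm : IsCoprime (p : ℤ) m) (hn : (p : ℤ) ∣ n) :
    (p : K)⁻¹ • f ∈ M := by
  have hp0 : (p : K) ≠ 0 := Nat.cast_ne_zero.2 hp
  obtain ⟨t, rfl⟩ := hn
  have hpf : (p : ℤ) • (p : K)⁻¹ • f = f := by
    rw [← Int.cast_smul_eq_zsmul K, Int.cast_natCast, smul_inv_smul₀ hp0]
  have hmf : m • (p : K)⁻¹ • f = x - t • g := by
    rw [← inv_smul_smul₀ hp0 x, h, mul_smul, natCast_zsmul, ← Nat.cast_smul_eq_nsmul K, smul_add,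
      inv_smul_smul₀ hp0, add_sub_cancel_right, smul_comm]
  exact mem_of_isCoprime_of_smul_mem hm (hpf.symm ▸ hf)
    (hmf.symm ▸ M.sub_mem hx (M.smul_mem t hg))

lemma mem_span_pair_of_smul_eq (hp : p ≠ 0) {m n : ℤ} (h : (p : K) • x = m • f + n • g)
    (hm : (p : ℤ) ∣ m) (hn : (p : ℤ) ∣ n) : x ∈ span ℤ {f, g} := by
  obtain ⟨s, rfl⟩ := hm
  obtain ⟨t, rfl⟩ := hn
  refine mem_span_pair.2 ⟨s, t, smul_right_injective V (Nat.cast_ne_zero.2 hp : (p : K) ≠ 0) ?_⟩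
  simp only [h, mul_smul, Nat.cast_smul_eq_nsmul, smul_add]

lemma IsEvenLattice.inv_smul_mem_or_inv_smul_mem (hM : IsEvenLattice B M) (hp : p.Prime)
    (h : IsHyperbolicPair B (p : K) f g) (hf : f ∈ M) (hg : g ∈ M) (hx : x ∈ M)
    (hx' : x ∉ span ℤ {f, g}) : (p : K)⁻¹ • f ∈ M ∨ (p : K)⁻¹ • g ∈ M := by
  obtain ⟨m, n, hmn, hdvd⟩ := hM.exists_smul_eq_and_dvd_mul h hf hg hx
  have hpZ : Prime (p : ℤ) := Nat.prime_iff_prime_int.1 hp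
  by_cases hm : (p : ℤ) ∣ m
  · have hn : IsCoprime (p : ℤ) n := hpZ.coprime_iff_not_dvd.2 fun hn ↦
      hx' (mem_span_pair_of_smul_eq hp.ne_zero hmn hm hn)
    rw [add_comm] at hmn
    exact .inr (inv_smul_mem_of_smul_eq hp.ne_zero hg hf hx hmn hn hm)
  · have hn : (p : ℤ) ∣ n := (hpZ.dvd_or_dvd hdvd).resolve_left hm
    rw [← hpZ.coprime_iff_not_dvd] at hm
    exact .inl (inv_smul_mem_of_smul_eq hp.ne_zero hf hg hx hmn hm hn)

lemma IsEvenLattice.exists_isHyperbolicPair_of_inv_smul_mem (hM : IsEvenLattice B M) (hp : p ≠ 0)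
    (h : IsHyperbolicPair B (p : K) f g) (hf : (p : K)⁻¹ • f ∈ M) (hg : g ∈ M) :
    ∃ u w, u ∈ M ∧ w ∈ M ∧ M = span ℤ {u, w} ∧ B u u = 0 ∧ B w w = 0 ∧ B u w = 1 := by
  have hp0 : (p : K) ≠ 0 := Nat.cast_ne_zero.2 hp
  have hU : IsHyperbolicPair B 1 ((p : K)⁻¹ • f) g :=
    inv_mul_cancel₀ hp0 ▸ h.smul_left (inv_ne_zero hp0).isUnit
  exact ⟨_, _, hf, hg, hM.eq_span_of_isHyperbolicPair hU hf hg, hU.left_self, hU.right_self,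
    hU.left_right⟩

theorem stmt15_general (hp : p.Prime) (h : IsHyperbolicPair B (p : K) f g)
    (hL : span ℤ {f, g} ≤ M) (hM : IsEvenLattice B M) (hne : M ≠ span ℤ {f, g}) :
    ∃ u w, u ∈ M ∧ w ∈ M ∧ M = span ℤ {u, w} ∧ B u u = 0 ∧ B w w = 0 ∧ B u w = 1 := by
  obtain ⟨hf, hg⟩ : f ∈ M ∧ g ∈ M := Set.pair_subset_iff.1 (span_le.1 hL)
  obtain ⟨x, hx, hx'⟩ := SetLike.exists_of_lt (lt_of_le_of_ne' hL hne)
  obtain hf' | hg' := hM.inv_smul_mem_or_inv_smul_mem hp h hf hg hx hx'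
  · exact hM.exists_isHyperbolicPair_of_inv_smul_mem hp.ne_zero h hf' hg
  · exact hM.exists_isHyperbolicPair_of_inv_smul_mem hp.ne_zero h.symm hg' hf

end Field

theorem stmt15 (B : (Fin 2 → ℚ) → (Fin 2 → ℚ) → ℚ)
    (hB : ∀ x y : Fin 2 → ℚ,
      B x y = 10 * x 0 * y 0 + 5 * x 0 * y 1 + 5 * x 1 * y 0)
    (M : Submodule ℤ (Fin 2 → ℚ))
    (hL : Submodule.span ℤ {![(1:ℚ), 0], ![0, 1]} ≤ M)
    (heven : ∀ x ∈ M, ∃ k : ℤ, B x x = 2 * k)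
    (hne : M ≠ Submodule.span ℤ {![(1:ℚ), 0], ![0, 1]}) :
    ∃ u w : Fin 2 → ℚ, u ∈ M ∧ w ∈ M ∧ M = Submodule.span ℤ {u, w} ∧
      B u u = 0 ∧ B w w = 0 ∧ B u w = 1 := by
  obtain rfl : B = fun x y ↦ Matrix.toBilin' !![2 * 1 * 5, 5; 5, 0] x y := by
    ext x y
    simp only [hB, Matrix.toBilin'_apply, Fin.sum_univ_two, Matrix.of_apply, Matrix.cons_val]
    ring
  have hspan : span ℤ {![(1 : ℚ), 0], ![0, 1]} = span ℤ {![1, -1], ![0, 1]} := by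
    rw [← span_pair_sub_smul_left 1]
    simp
  rw [hspan] at hL hne
  exact stmt15_general Nat.prime_five (isHyperbolicPair_toBilin' 1 5) hL heven hne
end

section
/- If M is a ℤ-submodule of ℚ² with L₀ ⊆ M and B(x,x) ∈ 2ℤ for every x ∈ M, then M = L₀; that is, the even lattice with Gram matrix [[10,2],[2,−2]] admits no nontrivial even overlattice. -/
/-!
A quadratic form that is integral on an overlattice `M ⊇ L` has an integral polar form on `M`, so
`M` lies in the dual lattice of `L`. Hence `L` has no proper even overlattice as soon as its
discriminant form is anisotropic, i.e. every dual vector of integral norm already lies in `L`.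

Here the form is `Q(a, b) = 5a² + 2ab - b²`, half of `B(x, x)`. Pairing a dual vector with `e₁` and
`e₂` gives integers `p = 10a + 2b` and `q = 2a - 2b`; with `m = p + q = 12a` one has
`24 Q(a, b) = m² - 6q²`. If `Q(a, b)` is an integer, divisibility by `24` forces `12 ∣ m` and
`2 ∣ q`, which makes `a` and `b` integers.
-/

open LinearMap (BilinForm)

section Overlattice

variable {R K V : Type*} [CommRing R] [Field K] [AddCommGroup V] [Algebra R K] [Module R V]
  [Module K V] [IsScalarTower R K V] {Q : QuadraticForm K V} {L M : Submodule R V}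

theorem le_dualSubmodule_polarBilin (hLM : L ≤ M) (hM : ∀ x ∈ M, Q x ∈ (1 : Submodule R K)) :
    M ≤ BilinForm.dualSubmodule Q.polarBilin L := fun x hx y hy ↦
  have hyM : y ∈ M := hLM hy
  sub_mem (sub_mem (hM _ (add_mem hx hyM)) (hM x hx)) (hM y hyM)

theorem eq_of_le_of_forall_mem_dualSubmodule
    (hL : ∀ x ∈ BilinForm.dualSubmodule Q.polarBilin L, Q x ∈ (1 : Submodule R K) → x ∈ L)
    (hLM : L ≤ M) (hM : ∀ x ∈ M, Q x ∈ (1 : Submodule R K)) : M = L :=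
  le_antisymm (fun x hx ↦ hL x (le_dualSubmodule_polarBilin hLM hM hx) (hM x hx)) hLM

end Overlattice

theorem twelve_dvd_and_two_dvd_of_sq_sub_six_mul_sq {m q k : ℤ} (h : m ^ 2 - 6 * q ^ 2 = 24 * k) :
    12 ∣ m ∧ 2 ∣ q := by
  have two_dvd_m : 2 ∣ m :=
    Int.prime_two.dvd_of_dvd_pow (n := 2) ⟨12 * k + 3 * q ^ 2, by linarith⟩
  have three_dvd_m : 3 ∣ m :=
    Int.prime_three.dvd_of_dvd_pow (n := 2) ⟨8 * k + 2 * q ^ 2, by linarith⟩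
  obtain ⟨n, rfl⟩ : 6 ∣ m := by lia
  obtain ⟨r, rfl⟩ : 2 ∣ q :=
    Int.prime_two.dvd_of_dvd_pow (n := 2) ⟨3 * n ^ 2 - 2 * k, by linarith⟩
  have two_dvd_n : 2 ∣ n :=
    Int.prime_two.dvd_of_dvd_pow (n := 2) ⟨k + r ^ 2 - n ^ 2, by linarith⟩
  exact ⟨by lia, dvd_mul_right 2 r⟩

theorem mem_span_int_pair_iff {A : Type*} [Ring A] {x : Fin 2 → A} :
    x ∈ Submodule.span ℤ {![(1 : A), 0], ![0, 1]} ↔ ∃ m n : ℤ, x 0 = m ∧ x 1 = n := by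
  simp [Submodule.mem_span_pair, funext_iff, Fin.forall_fin_two, eq_comm]

section HalfNorm

variable {K : Type*} [Field K]

/-- The quadratic form `x ↦ B(x, x) / 2` of the Gram matrix `[[10, 2], [2, -2]]`. The lattices on
which the Gram form is even are those on which this form is integral, and its polar form is the
Gram form itself. -/
def halfNorm (K : Type*) [Field K] : QuadraticForm K (Fin 2 → K) :=
  (5 : K) • QuadraticMap.proj 0 0 + (2 : K) • QuadraticMap.proj 0 1 - QuadraticMap.proj 1 1

theorem halfNorm_apply (x : Fin 2 → K) :
    halfNorm K x = 5 * x 0 ^ 2 + 2 * x 0 * x 1 - x 1 ^ 2 := by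
  simp only [halfNorm, sub_apply, add_apply, smul_apply, QuadraticMap.proj_apply, smul_eq_mul]
  ring

theorem polarBilin_halfNorm_apply (x y : Fin 2 → K) :
    (halfNorm K).polarBilin x y =
      10 * x 0 * y 0 + 2 * x 0 * y 1 + 2 * x 1 * y 0 - 2 * x 1 * y 1 := by
  simp only [QuadraticMap.polarBilin_apply_apply, QuadraticMap.polar, halfNorm_apply, Pi.add_apply]
  ring

theorem exists_int_of_mem_dualSubmodule_halfNorm {x : Fin 2 → K}
    (hx : x ∈ BilinForm.dualSubmodule (halfNorm K).polarBilin
      (Submodule.span ℤ {![(1 : K), 0], ![0, 1]})) :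
    ∃ m q : ℤ, 12 * x 0 = m ∧ 2 * x 0 - 2 * x 1 = q := by
  obtain ⟨p, hp⟩ := Submodule.mem_one.mp (hx ![1, 0] (Submodule.subset_span (by simp)))
  obtain ⟨q, hq⟩ := Submodule.mem_one.mp (hx ![0, 1] (Submodule.subset_span (by simp)))
  simp only [polarBilin_halfNorm_apply, algebraMap_int_eq, eq_intCast, Matrix.cons_val_zero,
    Matrix.cons_val_one, mul_zero, mul_one, add_zero, zero_add, sub_zero] at hp hq
  exact ⟨p + q, q, by push_cast; linear_combination -hp - hq, hq.symm⟩

variable [CharZero K]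

theorem mem_span_of_mem_dualSubmodule_halfNorm {x : Fin 2 → K}
    (hx : x ∈ BilinForm.dualSubmodule (halfNorm K).polarBilin
      (Submodule.span ℤ {![(1 : K), 0], ![0, 1]}))
    (hQ : halfNorm K x ∈ (1 : Submodule ℤ K)) :
    x ∈ Submodule.span ℤ {![(1 : K), 0], ![0, 1]} := by
  obtain ⟨m, q, hm, hq⟩ := exists_int_of_mem_dualSubmodule_halfNorm hx
  obtain ⟨k, hk⟩ := Submodule.mem_one.mp hQ
  rw [algebraMap_int_eq, eq_intCast, halfNorm_apply] at hk
  have norm_eq : m ^ 2 - 6 * q ^ 2 = 24 * k := by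
    have : (m : K) ^ 2 - 6 * (q : K) ^ 2 = 24 * k := by
      rw [← hm, ← hq, hk]
      ring
    exact_mod_cast this
  obtain ⟨⟨s, rfl⟩, ⟨r, rfl⟩⟩ := twelve_dvd_and_two_dvd_of_sq_sub_six_mul_sq norm_eq
  push_cast at hm hq
  have hx0 : x 0 = s := mul_left_cancel₀ (by norm_num) hm
  have hx1 : x 0 - x 1 = r := mul_left_cancel₀ two_ne_zero (by rw [mul_sub, hq])
  exact mem_span_int_pair_iff.mpr ⟨s, s - r, hx0, by push_cast; rw [← hx0, ← hx1, sub_sub_cancel]⟩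

theorem stmt16_general (B : (Fin 2 → K) → (Fin 2 → K) → K)
    (hB : ∀ x y : Fin 2 → K,
      B x y = 10 * x 0 * y 0 + 2 * x 0 * y 1 + 2 * x 1 * y 0 - 2 * x 1 * y 1)
    (M : Submodule ℤ (Fin 2 → K))
    (hL : Submodule.span ℤ {![(1 : K), 0], ![0, 1]} ≤ M)
    (heven : ∀ x ∈ M, ∃ k : ℤ, B x x = 2 * k) :
    M = Submodule.span ℤ {![(1 : K), 0], ![0, 1]} := by
  refine eq_of_le_of_forall_mem_dualSubmodule
    (fun _ ↦ mem_span_of_mem_dualSubmodule_halfNorm) hL fun x hx ↦ ?_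
  obtain ⟨k, hk⟩ := heven x hx
  have two_mul_halfNorm : 2 * (k : K) = 2 * halfNorm K x := by
    rw [← hk, hB, halfNorm_apply]
    ring
  exact Submodule.mem_one.mpr ⟨k, mul_left_cancel₀ two_ne_zero two_mul_halfNorm⟩

end HalfNorm

theorem stmt16 (B : (Fin 2 → ℚ) → (Fin 2 → ℚ) → ℚ)
    (hB : ∀ x y : Fin 2 → ℚ,
      B x y = 10 * x 0 * y 0 + 2 * x 0 * y 1 + 2 * x 1 * y 0 - 2 * x 1 * y 1)
    (M : Submodule ℤ (Fin 2 → ℚ))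
    (hL : Submodule.span ℤ {![(1:ℚ), 0], ![0, 1]} ≤ M)
    (heven : ∀ x ∈ M, ∃ k : ℤ, B x x = 2 * k) :
    M = Submodule.span ℤ {![(1:ℚ), 0], ![0, 1]} :=
  stmt16_general B hB M hL heven
end
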